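/- Quantitative tightness construction: for every integer q ≥ 1, consider machine types with costs c_k = 2^k and capacities B_k = 2^k for 0 ≤ k ≤ q and B_k = 2^{q+k} for k ≥ q+1 (which are strictly increasing with non-increasing cost-per-job 2^k/B_k). There exist a finite instance J of unit-length jobs, a valid interval assignment 𝒜 for J with Σ_{(I,t_I,J_I)∈𝒜} 2^{t_I} = 2^{2q+3} − 2^q, and a valid schedule for J of cost 2^{2q+1} + 2^{q+1}; in particular OPT(J) ≤ 2^{2q+1} + 2^{q+1}. -/

import Mathlib

structure SchedInstance where
  jobs : Finset ℕ
  r : ℕ → ℤ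
  d : ℕ → ℤ
  window : ∀ j ∈ jobs, r j ≤ d j

structure Batch where
  btype : ℕ
  time : ℤ
  bjobs : Finset ℕ
deriving DecidableEq

def ValidSchedule (B : ℕ → ℕ) (P : SchedInstance) (S : Finset Batch) : Prop :=
  (∀ X ∈ S, X.bjobs.card ≤ B X.btype) ∧
  (∀ X ∈ S, ∀ j ∈ X.bjobs, j ∈ P.jobs ∧ P.r j ≤ X.time ∧ X.time ≤ P.d j) ∧
  (∀ X ∈ S, ∀ Y ∈ S, X ≠ Y → Disjoint X.bjobs Y.bjobs) ∧
  (∀ j ∈ P.jobs, ∃ X ∈ S, j ∈ X.bjobs)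

noncomputable def schedCost (c : ℕ → ℝ) (S : Finset Batch) : ℝ :=
  ∑ X ∈ S, c X.btype

noncomputable def OPT (c : ℕ → ℝ) (B : ℕ → ℕ) (P : SchedInstance) : ℝ :=
  sInf {x : ℝ | ∃ S : Finset Batch, ValidSchedule B P S ∧ schedCost c S = x}

structure IAItem where
  lo : ℤ
  hi : ℤ
  itype : ℕ
  ijobs : Finset ℕ
deriving DecidableEq

def ValidAssignment (B : ℕ → ℕ) (P : SchedInstance) (A : Finset IAItem) : Prop :=
  (∀ e ∈ A, if e.itype = 0 then e.ijobs.card = 1 else e.ijobs.card = B (e.itype - 1)) ∧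
  (∀ e ∈ A, ∀ j ∈ e.ijobs, j ∈ P.jobs ∧ e.lo ≤ P.r j ∧ P.d j ≤ e.hi) ∧
  (∀ e ∈ A, ∀ e' ∈ A, e ≠ e' → e.itype = e'.itype →
      Set.Icc e.lo e.hi ∩ Set.Icc e'.lo e'.hi = ∅) ∧
  (∀ e ∈ A, ∀ e' ∈ A, e ≠ e' → Disjoint e.ijobs e'.ijobs)

/-- The capacities of the quantitative tightness construction:
`B k = 2^k` for `k ≤ q` and `B k = 2^(q+k)` for `k ≥ q + 1`. -/
def Bq (q : ℕ) : ℕ → ℕ := fun k => if k ≤ q then 2 ^ k else 2 ^ (q + k)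

/-! Take `m` unit times and `m + 1` blocks of `C` jobs each. In each of the first `m` blocks, `R`
jobs are rigid: they can only run at the time indexing their block; all other jobs are flexible. One
batch per block is a valid schedule, since the extra block consists of flexible jobs. An interval
assignment can be much more wasteful: at each time `i` it stacks point intervals `[i, i]` of all
types `t < T`, which together consume the rigid jobs of block `i`, and it spends one interval over
the whole horizon on all the flexible jobs.

With `m = 2 ^ q`, `C = 2 ^ (2 * q + 1)` and `T = q + 2`, the point intervals at one time consume
`1 + ∑ k ≤ q, 2 ^ k = 2 ^ (q + 1)` jobs, and the remaining `2 ^ (3 * q + 1)` jobs are precisely what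
an interval of type `2 * q + 2` holds. -/

theorem Bq_pos (q k : ℕ) : 0 < Bq q k := by
  unfold Bq
  split_ifs <;> positivity

theorem Bq_of_le {q k : ℕ} (h : k ≤ q) : Bq q k = 2 ^ k :=
  if_pos h

theorem Bq_of_lt {q k : ℕ} (h : q < k) : Bq q k = 2 ^ (q + k) :=
  if_neg h.not_ge

theorem two_mul_Bq_le_Bq_succ (q k : ℕ) : 2 * Bq q k ≤ Bq q (k + 1) := by
  rcases le_or_gt k q with hk | hk
  · rw [Bq_of_le hk, ← pow_succ']
    unfold Bq
    split_ifs
    · exact le_rfl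
    · exact Nat.pow_le_pow_right two_pos (by lia)
  · rw [Bq_of_lt hk, Bq_of_lt (hk.trans k.lt_succ_self), ← pow_succ', add_assoc]

theorem Bq_strictMono (q : ℕ) : StrictMono (Bq q) :=
  strictMono_nat_of_lt_succ fun k =>
    (lt_mul_of_one_lt_left (Bq_pos q k) one_lt_two).trans_le (two_mul_Bq_le_Bq_succ q k)

theorem two_pow_succ_div_Bq_succ_le (q k : ℕ) :
    (2 : ℝ) ^ (k + 1) / (Bq q (k + 1) : ℝ) ≤ (2 : ℝ) ^ k / (Bq q k : ℝ) := by
  have hpos : (0 : ℝ) < Bq q k := mod_cast Bq_pos q k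
  have hdouble : (2 : ℝ) * Bq q k ≤ Bq q (k + 1) := mod_cast two_mul_Bq_le_Bq_succ q k
  calc (2 : ℝ) ^ (k + 1) / Bq q (k + 1) ≤ 2 ^ (k + 1) / (2 * Bq q k) := by gcongr
    _ = 2 ^ k / Bq q k := by rw [pow_succ', mul_div_mul_left _ _ two_ne_zero]

theorem ValidSchedule.OPT_le_schedCost {c : ℕ → ℝ} {B : ℕ → ℕ} {P : SchedInstance}
    {S : Finset Batch} (hS : ValidSchedule B P S) (hc : ∀ k, 0 ≤ c k) :
    OPT c B P ≤ schedCost c S := by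
  refine csInf_le ⟨0, ?_⟩ ⟨S, hS, rfl⟩
  rintro _ ⟨S', -, rfl⟩
  exact Finset.sum_nonneg fun X _ => hc X.btype

/-- The number of jobs that condition (1) of a valid interval assignment prescribes for an interval
of type `t`. -/
def itemCard (B : ℕ → ℕ) : ℕ → ℕ
  | 0 => 1
  | t + 1 => B t

theorem eq_itemCard_iff {B : ℕ → ℕ} {n t : ℕ} :
    n = itemCard B t ↔ if t = 0 then n = 1 else n = B (t - 1) := by
  cases t <;> simp [itemCard]

theorem ValidAssignment.insert {B : ℕ → ℕ} {P : SchedInstance} {A : Finset IAItem} {e : IAItem}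
    (hA : ValidAssignment B P A) (hcard : e.ijobs.card = itemCard B e.itype)
    (hwindow : ∀ j ∈ e.ijobs, j ∈ P.jobs ∧ e.lo ≤ P.r j ∧ P.d j ≤ e.hi)
    (htype : ∀ e' ∈ A, e.itype ≠ e'.itype) (hdisj : ∀ e' ∈ A, Disjoint e.ijobs e'.ijobs) :
    ValidAssignment B P (insert e A) := by
  obtain ⟨hAcard, hAwindow, hAtype, hAdisj⟩ := hA
  simp only [ValidAssignment, Finset.forall_mem_insert]
  exact ⟨⟨eq_itemCard_iff.1 hcard, hAcard⟩, ⟨hwindow, hAwindow⟩,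
    ⟨⟨fun h => absurd rfl h, fun e' he' _ h => absurd h (htype e' he')⟩,
      fun e' he' => ⟨fun _ h => absurd h.symm (htype e' he'), hAtype e' he'⟩⟩,
    ⟨fun h => absurd rfl h, fun e' he' _ => hdisj e' he'⟩,
    fun e' he' => ⟨fun _ => (hdisj e' he').symm, hAdisj e' he'⟩⟩

namespace TightnessConstruction

section Blocks

variable {m C R i j a b : ℕ}

/-- The jobs at the offsets `a, …, b - 1` of the `i`-th block of `C` jobs, where job `j` lies in
block `j / C` at offset `j % C`. -/
def segment (C i a b : ℕ) : Finset ℕ :=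
  Finset.Ico (i * C + a) (i * C + b)

theorem card_segment (C i a b : ℕ) : (segment C i a b).card = b - a := by
  rw [segment, Nat.card_Ico, Nat.add_sub_add_left]

theorem mem_segment_iff (hb : b ≤ C) :
    j ∈ segment C i a b ↔ j / C = i ∧ a ≤ j % C ∧ j % C < b := by
  rw [segment, Finset.mem_Ico]
  constructor
  · rintro ⟨hlo, hhi⟩
    obtain rfl : j / C = i := Nat.div_eq_of_lt_le (by lia) (by rw [Nat.succ_mul]; lia)
    have := Nat.div_add_mod' j C
    lia
  · rintro ⟨rfl, hlo, hhi⟩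
    have := Nat.div_add_mod' j C
    lia

theorem lt_mul_of_mem_segment (hb : b ≤ C) (hi : i < m) (hj : j ∈ segment C i a b) :
    j < m * C := by
  obtain ⟨rfl, -, hmod⟩ := (mem_segment_iff hb).1 hj
  exact (Nat.div_lt_iff_lt_mul (by lia)).1 hi

/-- The jobs that can run at a single time only: the first `R` jobs of each of the first `m`
blocks of `C` jobs. -/
def rigidJobs (m C R : ℕ) : Finset ℕ :=
  {j ∈ Finset.range (m * C) | j % C < R}

theorem mem_rigidJobs : j ∈ rigidJobs m C R ↔ j < m * C ∧ j % C < R := by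
  simp only [rigidJobs, Finset.mem_filter, Finset.mem_range]

theorem div_lt_of_mem_rigidJobs (hj : j ∈ rigidJobs m C R) : j / C < m :=
  Nat.div_lt_of_lt_mul (by rw [mul_comm]; exact (mem_rigidJobs.1 hj).1)

theorem rigidJobs_subset_range (m C R : ℕ) : rigidJobs m C R ⊆ Finset.range ((m + 1) * C) := by
  intro j hj
  rw [Finset.mem_range, Nat.succ_mul]
  exact (mem_rigidJobs.1 hj).1.trans_le (Nat.le_add_right _ _)

theorem card_rigidJobs (hR : R ≤ C) : (rigidJobs m C R).card = m * R := by
  have hfiber : ∀ i ∈ Finset.range m, {j ∈ rigidJobs m C R | j / C = i} = segment C i 0 R := by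
    intro i hi
    ext j
    rw [Finset.mem_filter, mem_rigidJobs]
    constructor
    · rintro ⟨⟨-, hmod⟩, hdiv⟩
      exact (mem_segment_iff hR).2 ⟨hdiv, Nat.zero_le _, hmod⟩
    · intro hj
      obtain ⟨hdiv, -, hmod⟩ := (mem_segment_iff hR).1 hj
      exact ⟨⟨lt_mul_of_mem_segment hR (Finset.mem_range.1 hi) hj, hmod⟩, hdiv⟩
  rw [Finset.card_eq_sum_card_fiberwise fun j hj =>
      Finset.mem_coe.2 (Finset.mem_range.2 (div_lt_of_mem_rigidJobs hj)),
    Finset.sum_congr rfl fun i hi => by rw [hfiber i hi, card_segment, Nat.sub_zero],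
    Finset.sum_const, Finset.card_range, smul_eq_mul]

/-- The tightness instance: `m + 1` blocks of `C` jobs, where a rigid job can only run at the index
of its block and every other job at any of the times `0, …, m - 1`. The truncated `m - 1` keeps the
windows nonempty for `m = 0`. -/
def blockInstance (m C R : ℕ) : SchedInstance where
  jobs := Finset.range ((m + 1) * C)
  r j := if j ∈ rigidJobs m C R then (j / C : ℕ) else 0
  d j := if j ∈ rigidJobs m C R then (j / C : ℕ) else (m - 1 : ℕ)
  window j _ := by
    split_ifs
    · exact le_rfl
    · exact Int.natCast_nonneg _

/-- The jobs of `blockInstance m C R` that can run at any time. -/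
def flexibleJobs (m C R : ℕ) : Finset ℕ :=
  (blockInstance m C R).jobs \ rigidJobs m C R

theorem card_flexibleJobs (hR : R ≤ C) : (flexibleJobs m C R).card = m * (C - R) + C := by
  have hle : m * R ≤ m * C := Nat.mul_le_mul_left m hR
  rw [flexibleJobs, blockInstance, Finset.card_sdiff_of_subset (rigidJobs_subset_range m C R),
    card_rigidJobs hR, Finset.card_range, Nat.mul_sub, Nat.succ_mul]
  lia

end Blocks

section Schedule

variable {m C k : ℕ}

/-- The batch of type `k` running the `b`-th block of `C` jobs at time `b`, except that the extra
block `b = m` joins the last block at time `m - 1`. -/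
def blockBatch (m C k b : ℕ) : Batch where
  btype := k
  time := (min b (m - 1) : ℕ)
  bjobs := segment C b 0 C

/-- The schedule of `blockInstance m C R` with one batch of type `k` per block. -/
def blockSchedule (m C k : ℕ) : Finset Batch :=
  (Finset.range (m + 1)).image (blockBatch m C k)

theorem mem_blockSchedule {X : Batch} :
    X ∈ blockSchedule m C k ↔ ∃ b < m + 1, blockBatch m C k b = X := by
  simp only [blockSchedule, Finset.mem_image, Finset.mem_range]

theorem mem_bjobs_blockBatch {b j : ℕ} (hC : 0 < C) :
    j ∈ (blockBatch m C k b).bjobs ↔ j / C = b := by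
  simp only [blockBatch, mem_segment_iff le_rfl, Nat.zero_le, Nat.mod_lt j hC, and_true]

theorem blockBatch_injective (hC : 0 < C) : Function.Injective (blockBatch m C k) := by
  intro b b' h
  have hmem : b * C ∈ (blockBatch m C k b).bjobs :=
    (mem_bjobs_blockBatch hC).2 (Nat.mul_div_cancel b hC)
  rw [h, mem_bjobs_blockBatch hC, Nat.mul_div_cancel b hC] at hmem
  exact hmem

theorem min_div_mem_window (m C R j : ℕ) :
    (blockInstance m C R).r j ≤ (min (j / C) (m - 1) : ℕ) ∧
      ((min (j / C) (m - 1) : ℕ) : ℤ) ≤ (blockInstance m C R).d j := by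
  simp only [blockInstance]
  split_ifs with hj
  · rw [min_eq_left (Nat.le_sub_one_of_lt (div_lt_of_mem_rigidJobs hj))]
    exact ⟨le_rfl, le_rfl⟩
  · exact ⟨Int.natCast_nonneg _, Int.ofNat_le.2 (min_le_right _ _)⟩

theorem validSchedule_blockSchedule {B : ℕ → ℕ} (R : ℕ) (hC : 0 < C) (hCB : C ≤ B k) :
    ValidSchedule B (blockInstance m C R) (blockSchedule m C k) := by
  refine ⟨fun X hX => ?_, fun X hX j hj => ?_, fun X hX Y hY hXY => ?_, fun j hj => ?_⟩
  · obtain ⟨b, -, rfl⟩ := mem_blockSchedule.1 hX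
    exact (card_segment C b 0 C).trans_le hCB
  · obtain ⟨b, hb, rfl⟩ := mem_blockSchedule.1 hX
    refine ⟨Finset.mem_range.2 (lt_mul_of_mem_segment le_rfl hb hj), ?_⟩
    obtain rfl := (mem_bjobs_blockBatch hC).1 hj
    exact min_div_mem_window m C R j
  · obtain ⟨b, -, rfl⟩ := mem_blockSchedule.1 hX
    obtain ⟨b', -, rfl⟩ := mem_blockSchedule.1 hY
    refine Finset.disjoint_left.2 fun j hj hj' => hXY ?_
    rw [← (mem_bjobs_blockBatch hC).1 hj, ← (mem_bjobs_blockBatch hC).1 hj']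
  · have hblock : j / C < m + 1 := (Nat.div_lt_iff_lt_mul hC).2 (Finset.mem_range.1 hj)
    exact ⟨_, mem_blockSchedule.2 ⟨_, hblock, rfl⟩, (mem_bjobs_blockBatch hC).2 rfl⟩

theorem schedCost_blockSchedule (c : ℕ → ℝ) (hC : 0 < C) :
    schedCost c (blockSchedule m C k) = (m + 1) * c k := by
  rw [schedCost, blockSchedule, Finset.sum_image (blockBatch_injective hC).injOn]
  simp only [blockBatch, Finset.sum_const, Finset.card_range, nsmul_eq_mul, Nat.cast_add_one]

end Schedule

section Assignment

variable {B : ℕ → ℕ} {m C T i t j w : ℕ}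

/-- The number of jobs held by one interval of each type below `t`, used as the offset in its block
at which the jobs of the point interval of type `t` start. -/
def itemOffset (B : ℕ → ℕ) (t : ℕ) : ℕ :=
  ∑ s ∈ Finset.range t, itemCard B s

theorem itemOffset_succ (B : ℕ → ℕ) (t : ℕ) :
    itemOffset B (t + 1) = itemOffset B t + itemCard B t :=
  Finset.sum_range_succ _ _

theorem itemOffset_mono (B : ℕ → ℕ) : Monotone (itemOffset B) :=
  monotone_nat_of_le_succ fun t => (itemOffset_succ B t).symm ▸ Nat.le_add_right _ _

theorem itemOffset_Bq_succ {q : ℕ} (ht : t ≤ q + 1) : itemOffset (Bq q) (t + 1) = 2 ^ t := by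
  induction t with
  | zero => rfl
  | succ t ih =>
    rw [itemOffset_succ, ih (by lia), itemCard, Bq_of_le (by lia), pow_succ, mul_two]

/-- The item of type `t` on the interval `[i, i]`. -/
def pointItem (B : ℕ → ℕ) (C i t : ℕ) : IAItem where
  lo := i
  hi := i
  itype := t
  ijobs := segment C i (itemOffset B t) (itemOffset B (t + 1))

/-- The items of all types below `T` on all intervals `[i, i]` with `i < m`. -/
def pointItems (B : ℕ → ℕ) (m C T : ℕ) : Finset IAItem :=
  (Finset.range m ×ˢ Finset.range T).image fun p => pointItem B C p.1 p.2

theorem mem_pointItems {e : IAItem} :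
    e ∈ pointItems B m C T ↔ ∃ i < m, ∃ t < T, pointItem B C i t = e := by
  simp only [pointItems, Finset.mem_image, Finset.mem_product, Finset.mem_range, Prod.exists,
    and_assoc, exists_and_left]

theorem pointItem_injective (B : ℕ → ℕ) (C : ℕ) :
    Function.Injective fun p : ℕ × ℕ => pointItem B C p.1 p.2 := fun _ _ h =>
  Prod.ext (Nat.cast_injective (congrArg IAItem.lo h)) (congrArg IAItem.itype h)

theorem card_ijobs_pointItem (B : ℕ → ℕ) (C i t : ℕ) :
    (pointItem B C i t).ijobs.card = itemCard B t := by
  rw [pointItem, card_segment, itemOffset_succ, Nat.add_sub_cancel_left]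

theorem mem_ijobs_pointItem (hT : itemOffset B T ≤ C) (ht : t < T) :
    j ∈ (pointItem B C i t).ijobs ↔
      j / C = i ∧ j % C ∈ Set.Ico (itemOffset B t) (itemOffset B (t + 1)) :=
  mem_segment_iff ((itemOffset_mono B ht).trans hT)

theorem ijobs_pointItem_subset_rigidJobs (hT : itemOffset B T ≤ C) (hi : i < m) (ht : t < T) :
    (pointItem B C i t).ijobs ⊆ rigidJobs m C (itemOffset B T) := fun _ hj =>
  mem_rigidJobs.2 ⟨lt_mul_of_mem_segment ((itemOffset_mono B ht).trans hT) hi hj,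
    ((mem_ijobs_pointItem hT ht).1 hj).2.2.trans_le (itemOffset_mono B ht)⟩

theorem disjoint_ijobs_pointItem {i' t' : ℕ} (hT : itemOffset B T ≤ C) (ht : t < T) (ht' : t' < T)
    (hne : pointItem B C i t ≠ pointItem B C i' t') :
    Disjoint (pointItem B C i t).ijobs (pointItem B C i' t').ijobs := by
  refine Finset.disjoint_left.2 fun j hj hj' => hne ?_
  obtain ⟨rfl, hoffset⟩ := (mem_ijobs_pointItem hT ht).1 hj
  obtain ⟨rfl, hoffset'⟩ := (mem_ijobs_pointItem hT ht').1 hj'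
  by_contra htt'
  exact Set.disjoint_left.1 ((itemOffset_mono B).pairwise_disjoint_on_Ico_succ
    fun h => htt' (by rw [h])) hoffset hoffset'

theorem validAssignment_pointItems (hT : itemOffset B T ≤ C) :
    ValidAssignment B (blockInstance m C (itemOffset B T)) (pointItems B m C T) := by
  refine ⟨fun e he => ?_, fun e he j hj => ?_, fun e he e' he' hne htype => ?_,
    fun e he e' he' hne => ?_⟩ <;> obtain ⟨i, hi, t, ht, rfl⟩ := mem_pointItems.1 he
  · exact eq_itemCard_iff.1 (card_ijobs_pointItem B C i t)
  · have hrigid := ijobs_pointItem_subset_rigidJobs hT hi ht hj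
    obtain ⟨rfl, -⟩ := (mem_ijobs_pointItem hT ht).1 hj
    simp only [blockInstance, pointItem, if_pos hrigid, le_refl, and_self, and_true]
    exact rigidJobs_subset_range _ _ _ hrigid
  · obtain ⟨i', -, t', -, rfl⟩ := mem_pointItems.1 he'
    obtain rfl : t = t' := htype
    have hii' : (i : ℤ) ≠ i' := fun h => hne (by rw [Nat.cast_injective h])
    simpa only [pointItem, Set.Icc_self, Set.singleton_inter_eq_empty, Set.mem_singleton_iff]
      using hii'
  · obtain ⟨i', -, t', ht', rfl⟩ := mem_pointItems.1 he'
    exact disjoint_ijobs_pointItem hT ht ht' hne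

/-- The item of type `w` on the whole horizon `[0, m - 1]`, holding all flexible jobs. -/
def horizonItem (m C R w : ℕ) : IAItem where
  lo := 0
  hi := (m - 1 : ℕ)
  itype := w
  ijobs := flexibleJobs m C R

/-- The point items of all types below `T`, together with an item of type `w` on the whole
horizon. -/
def assignment (B : ℕ → ℕ) (m C T w : ℕ) : Finset IAItem :=
  insert (horizonItem m C (itemOffset B T) w) (pointItems B m C T)

theorem itype_lt_of_mem_pointItems {e : IAItem} (he : e ∈ pointItems B m C T) : e.itype < T := by
  obtain ⟨i, -, t, ht, rfl⟩ := mem_pointItems.1 he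
  exact ht

theorem validAssignment_assignment (hT : itemOffset B T ≤ C) (hTw : T ≤ w)
    (hw : (flexibleJobs m C (itemOffset B T)).card = itemCard B w) :
    ValidAssignment B (blockInstance m C (itemOffset B T)) (assignment B m C T w) := by
  refine (validAssignment_pointItems hT).insert hw (fun j hj => ?_)
    (fun e he => ((itype_lt_of_mem_pointItems he).trans_le hTw).ne') (fun e he => ?_)
  · obtain ⟨hjob, hflexible⟩ := Finset.mem_sdiff.1 hj
    refine ⟨hjob, ?_⟩
    simp only [blockInstance, horizonItem, if_neg hflexible, le_refl, and_self]
  · obtain ⟨i, hi, t, ht, rfl⟩ := mem_pointItems.1 he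
    exact Finset.sdiff_disjoint.mono_right (ijobs_pointItem_subset_rigidJobs hT hi ht)

theorem sum_assignment {M : Type*} [AddCommMonoid M] (hTw : T ≤ w) (c : ℕ → M) :
    ∑ e ∈ assignment B m C T w, c e.itype = c w + m • ∑ t ∈ Finset.range T, c t := by
  have hnotMem : horizonItem m C (itemOffset B T) w ∉ pointItems B m C T := fun h =>
    hTw.not_gt (itype_lt_of_mem_pointItems h)
  rw [assignment, Finset.sum_insert hnotMem, pointItems,
    Finset.sum_image (pointItem_injective B C).injOn, Finset.sum_product]
  simp only [pointItem, horizonItem, Finset.sum_const, Finset.card_range]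

end Assignment

theorem itemOffset_Bq_le_Bq (q : ℕ) : itemOffset (Bq q) (q + 2) ≤ Bq q (q + 1) := by
  rw [itemOffset_Bq_succ le_rfl, Bq_of_lt q.lt_succ_self]
  exact Nat.pow_le_pow_right two_pos (Nat.le_add_left _ _)

theorem card_flexibleJobs_Bq (q : ℕ) :
    (flexibleJobs (2 ^ q) (Bq q (q + 1)) (itemOffset (Bq q) (q + 2))).card =
      itemCard (Bq q) (2 * q + 2) := by
  have hle : 2 ^ (q + (q + 1)) ≤ 2 ^ q * 2 ^ (q + (q + 1)) :=
    Nat.le_mul_of_pos_left _ (by positivity)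
  rw [card_flexibleJobs (itemOffset_Bq_le_Bq q), itemOffset_Bq_succ le_rfl, itemCard,
    Bq_of_lt q.lt_succ_self, Bq_of_lt (by lia), Nat.mul_sub, ← pow_add 2 q (q + 1),
    Nat.sub_add_cancel hle]
  ring

theorem sum_two_pow_assignment (B : ℕ → ℕ) (C q : ℕ) :
    ∑ e ∈ assignment B (2 ^ q) C (q + 2) (2 * q + 2), (2 : ℝ) ^ e.itype =
      2 ^ (2 * q + 3) - 2 ^ q := by
  rw [sum_assignment (by lia) (fun k => (2 : ℝ) ^ k), geom_sum_eq (by norm_num), nsmul_eq_mul]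
  push_cast
  ring

theorem schedCost_two_pow_blockSchedule {C : ℕ} (q : ℕ) (hC : 0 < C) :
    schedCost (fun k => (2 : ℝ) ^ k) (blockSchedule (2 ^ q) C (q + 1)) =
      2 ^ (2 * q + 1) + 2 ^ (q + 1) := by
  rw [schedCost_blockSchedule _ hC]
  push_cast
  ring

end TightnessConstruction

open TightnessConstruction

/-- the quantitative tightness construction.  For every `q ≥ 1`, the
capacities `Bq q` are strictly increasing with non-increasing cost-per-job, and there
exist an instance `J`, a valid interval assignment `𝒜` with
`∑_{(I,t_I,J_I) ∈ 𝒜} 2^{t_I} = 2^(2q+3) − 2^q`, and a valid schedule of cost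
`2^(2q+1) + 2^(q+1)`; in particular `OPT(J) ≤ 2^(2q+1) + 2^(q+1)`. -/
theorem quantitative_tightness_construction (q : ℕ) (hq : 1 ≤ q) :
    StrictMono (Bq q) ∧
    (∀ k, (2 : ℝ) ^ (k + 1) / (Bq q (k + 1) : ℝ) ≤ (2 : ℝ) ^ k / (Bq q k : ℝ)) ∧
    ∃ (P : SchedInstance) (A : Finset IAItem) (S : Finset Batch),
      ValidAssignment (Bq q) P A ∧
      (∑ e ∈ A, (2 : ℝ) ^ e.itype) = 2 ^ (2 * q + 3) - 2 ^ q ∧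
      ValidSchedule (Bq q) P S ∧
      schedCost (fun k => (2 : ℝ) ^ k) S = 2 ^ (2 * q + 1) + 2 ^ (q + 1) ∧
      OPT (fun k => (2 : ℝ) ^ k) (Bq q) P ≤ 2 ^ (2 * q + 1) + 2 ^ (q + 1) := by
  have hC : 0 < Bq q (q + 1) := Bq_pos q (q + 1)
  have hA := validAssignment_assignment (itemOffset_Bq_le_Bq q) (by lia) (card_flexibleJobs_Bq q)
  have hS := validSchedule_blockSchedule (m := 2 ^ q) (itemOffset (Bq q) (q + 2)) hC le_rfl
  have hcost := schedCost_two_pow_blockSchedule q hC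
  exact ⟨Bq_strictMono q, two_pow_succ_div_Bq_succ_le q, _, _, _, hA,
    sum_two_pow_assignment (Bq q) (Bq q (q + 1)) q, hS, hcost,
    hcost ▸ hS.OPT_le_schedCost fun k => by positivity⟩
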